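/- arXiv:2208.03253 — 2 statements merged into one kernel-verified Lean document; each statement's English description precedes it below -/
import Mathlib

section
/- Let $p > 1$, $r_0 \ge 0$, $c_p \ge 0$, let $(\kappa_s)_{s>1}$ be a family of constants $\kappa_s \ge 0$, and let $1 \le p' < p$ and $r > 1$. Then there exists a constant $c \ge 0$, depending only on $p'$, $r_0$, $p$, $c_p$, $(\kappa_s)_{s>1}$ and $r$, such that the following holds. Let $(\Omega, \mathcal F, \mathbb P)$ be a probability space; for each $n \ge 1$ let $A_n, A'_n, B_n, B'_n : \Omega \to \mathbb R$ be random variables and let $\Omega_n \in \mathcal F$ be an event such that $(A_n(\omega), B_n(\omega)) = (A'_n(\omega), B'_n(\omega))$ for every $\omega \in \Omega_n$. Assume that (i) $\mathbb P(\Omega_n^c) \le \kappa_s n^{-s}$ for all $s > 1$ and all $n \ge 1$; and (ii) $\|A_n\|_{L^p} + \|A'_n\|_{L^p} \le c_p n^{r_0}$ for all $n \ge 1$ (in particular $A_n, A'_n \in L^p(\mathbb P)$). Then for all $n \ge 1$, $$\big\| \mathbb E[A_n \mid \sigma(B_n)] - \mathbb E[A'_n \mid \sigma(B'_n)] \big\|_{L^{p'}}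 \le c\, n^{-r}.$$ Here $\mathbb E[A \mid \sigma(B)]$ is the conditional expectation of $A$ given the $\sigma$-algebra generated by $B$, and $\|\cdot\|_{L^q}$ is the $L^q(\mathbb P)$-norm. -/
open MeasureTheory

/-!
If `v` is the conditional expectation of `f` given `m` under the restriction of `μ` to an event `E`,
Bayes' formula says `μ[1_E f | m] = μ⟦E | m⟧ v`. Hence `μ[f | m] - 1_E v` is a sum of three terms,
each carrying a factor supported on `Eᶜ`, and Hölder's inequality bounds it by a positive power of
`μ Eᶜ`. The function `1_E v` only sees `f` and the σ-algebra `m` on `E`, so it is the same for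
`(A, σ(B))` and `(A', σ(B'))`; the triangle inequality through it compares the two conditional
expectations. Since `μ Eᶜ` decays faster than every power of `n`, that power of `μ Eᶜ` absorbs the
growth `n ^ r₀` of the norms.
-/

section RestrictedConditioning

open scoped ENNReal ProbabilityTheory

theorem indicator_one_smul {α R M : Type*} [MonoidWithZero R] [Zero M] [MulActionWithZero R M]
    (s : Set α) (f : α → M) : s.indicator (1 : α → R) • f = s.indicator f := by
  ext a
  by_cases ha : a ∈ s <;> simp [ha]

variable {Ω 𝓑 F : Type*} {m mΩ : MeasurableSpace Ω} {m𝓑 : MeasurableSpace 𝓑}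
  {μ : Measure Ω} {E : Set Ω} [NormedAddCommGroup F] [NormedSpace ℝ F]

theorem eLpNorm_indicator_le_eLpNorm_mul_rpow_measure (p t q : ℝ≥0∞) [ENNReal.HolderTriple p t q]
    (hE : MeasurableSet E) {f : Ω → F} (hf : AEStronglyMeasurable f μ) :
    eLpNorm (E.indicator f) q μ ≤ eLpNorm f p μ * μ E ^ (1 / t.toReal) := by
  calc eLpNorm (E.indicator f) q μ
      ≤ eLpNorm (E.indicator fun _ => (1 : ℝ)) t μ * eLpNorm f p μ :=
        indicator_one_smul (R := ℝ) E f ▸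
          eLpNorm_smul_le_mul_eLpNorm hf (aestronglyMeasurable_const.indicator hE)
    _ ≤ μ E ^ (1 / t.toReal) * eLpNorm f p μ := by
        gcongr
        simpa using eLpNorm_indicator_const_le (1 : ℝ) t (μ := μ) (s := E)
    _ = eLpNorm f p μ * μ E ^ (1 / t.toReal) := mul_comm _ _

theorem eLpNorm_condExp_indicator_one_le_rpow_measure {t : ℝ≥0∞} (ht : 1 ≤ t) :
    eLpNorm (μ⟦E | m⟧) t μ ≤ μ E ^ (1 / t.toReal) :=
  (eLpNorm_condExp_le_eLpNorm _ ht).trans <| by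
    simpa using eLpNorm_indicator_const_le (1 : ℝ) t (μ := μ) (s := E)

variable [CompleteSpace F]

theorem eLpNorm_indicator_condExp_restrict_le (hE : MeasurableSet E) (f : Ω → F) {p : ℝ≥0∞}
    (hp : 1 ≤ p) :
    eLpNorm (E.indicator ((μ.restrict E)[f | m])) p μ ≤ eLpNorm f p μ := by
  rw [eLpNorm_indicator_eq_eLpNorm_restrict hE]
  exact (eLpNorm_condExp_le_eLpNorm f hp).trans (eLpNorm_restrict_le f p μ E)

theorem condExp_ae_eq_condExp_indicator_add_compl (hE : MeasurableSet E) {f : Ω → F}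
    (hf : Integrable f μ) :
    μ[f | m] =ᵐ[μ] μ[E.indicator f | m] + μ[Eᶜ.indicator f | m] := by
  simpa only [Set.indicator_self_add_compl] using
    condExp_add (hf.indicator hE) (hf.indicator hE.compl) m

variable [IsFiniteMeasure μ]

theorem condExp_indicator_condExp_restrict (hm : m ≤ mΩ) (hE : MeasurableSet E) {f : Ω → F}
    (hf : IntegrableOn f E μ) :
    μ[E.indicator ((μ.restrict E)[f | m]) | m] =ᵐ[μ] μ[E.indicator f | m] := by
  have setIntegral_indicator_eq {s : Set Ω} (hs : MeasurableSet[m] s) (g : Ω → F) :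
      ∫ ω in s, E.indicator g ω ∂μ = ∫ ω in s, g ω ∂(μ.restrict E) := by
    rw [setIntegral_indicator hE, Measure.restrict_restrict (hm s hs)]
  have hi : Integrable (E.indicator ((μ.restrict E)[f | m])) μ :=
    (integrable_indicator_iff hE).2 integrable_condExp
  refine ae_eq_condExp_of_forall_setIntegral_eq hm ((integrable_indicator_iff hE).2 hf)
    (fun s _ _ => integrable_condExp.integrableOn) (fun s hs _ => ?_)
    stronglyMeasurable_condExp.aestronglyMeasurable
  rw [setIntegral_condExp hm hi hs, setIntegral_indicator_eq hs, setIntegral_indicator_eq hs,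
    setIntegral_condExp hm hf hs]

theorem condExp_indicator_ae_eq_condExp_smul_condExp_restrict (hm : m ≤ mΩ) (hE : MeasurableSet E)
    {f : Ω → F} (hf : IntegrableOn f E μ) :
    μ[E.indicator f | m] =ᵐ[μ] μ⟦E | m⟧ • (μ.restrict E)[f | m] := by
  set v := (μ.restrict E)[f | m]
  have hi : Integrable (E.indicator v) μ := (integrable_indicator_iff hE).2 integrable_condExp
  have hsmul : E.indicator (fun _ => (1 : ℝ)) • v = E.indicator v := indicator_one_smul E v
  calc μ[E.indicator f | m] =ᵐ[μ] μ[E.indicator v | m] :=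
        (condExp_indicator_condExp_restrict hm hE hf).symm
    _ =ᵐ[μ] μ⟦E | m⟧ • v := hsmul ▸
        condExp_smul_of_aestronglyMeasurable_right ((integrable_const (1 : ℝ)).indicator hE)
          (by rwa [hsmul]) stronglyMeasurable_condExp.aestronglyMeasurable

theorem condExp_sub_indicator_condExp_restrict_ae_eq (hm : m ≤ mΩ) (hE : MeasurableSet E)
    {f : Ω → F} (hf : Integrable f μ) :
    μ[f | m] - E.indicator ((μ.restrict E)[f | m]) =ᵐ[μ]
      Eᶜ.indicator (μ[f | m]) + E.indicator (μ[Eᶜ.indicator f | m])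
        - μ⟦Eᶜ | m⟧ • E.indicator ((μ.restrict E)[f | m]) := by
  have hone : (fun _ => (1 : ℝ)) =ᵐ[μ] μ⟦E | m⟧ + μ⟦Eᶜ | m⟧ := by
    simpa only [condExp_const hm] using
      condExp_ae_eq_condExp_indicator_add_compl (μ := μ) (m := m) hE (integrable_const (1 : ℝ))
  filter_upwards [condExp_ae_eq_condExp_indicator_add_compl (m := m) hE hf, hone,
    condExp_indicator_ae_eq_condExp_smul_condExp_restrict hm hE hf.integrableOn]
    with ω hsplit hone hbayes
  by_cases hω : ω ∈ E
  · simp only [Pi.add_apply, Pi.smul_apply'] at hsplit hone hbayes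
    have hcompl : (μ⟦Eᶜ | m⟧) ω = 1 - (μ⟦E | m⟧) ω := by linarith
    simp only [Pi.sub_apply, Pi.add_apply, Pi.smul_apply', Set.indicator_of_mem hω,
      Set.indicator_of_notMem (Set.notMem_compl_iff.2 hω), hsplit, hbayes, hcompl]
    module
  · simp [hω]

theorem eLpNorm_condExp_sub_indicator_condExp_restrict_le (p t : ℝ≥0∞) {q : ℝ≥0∞}
    [ENNReal.HolderTriple p t q] (hq : 1 ≤ q) (hm : m ≤ mΩ) (hE : MeasurableSet E) {f : Ω → F}
    (hf : MemLp f p μ) :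
    eLpNorm (μ[f | m] - E.indicator ((μ.restrict E)[f | m])) q μ
      ≤ 3 * (eLpNorm f p μ * μ Eᶜ ^ (1 / t.toReal)) := by
  set v := (μ.restrict E)[f | m]
  set δ := eLpNorm f p μ * μ Eᶜ ^ (1 / t.toReal)
  have hp : 1 ≤ p := hq.trans (ENNReal.HolderTriple.le p t q)
  have ht : 1 ≤ t := hq.trans (ENNReal.HolderTriple.le t p q)
  have hfm : AEStronglyMeasurable (μ[f | m]) μ := integrable_condExp.aestronglyMeasurable
  have hfEm : AEStronglyMeasurable (E.indicator (μ[Eᶜ.indicator f | m])) μ :=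
    integrable_condExp.aestronglyMeasurable.indicator hE
  have hvm : AEStronglyMeasurable (E.indicator v) μ :=
    (stronglyMeasurable_condExp.mono hm).aestronglyMeasurable.indicator hE
  have hqm : AEStronglyMeasurable (μ⟦Eᶜ | m⟧) μ := integrable_condExp.aestronglyMeasurable
  have hcompl : eLpNorm (Eᶜ.indicator (μ[f | m])) q μ ≤ δ :=
    (eLpNorm_indicator_le_eLpNorm_mul_rpow_measure p t q hE.compl hfm).trans <|
      mul_le_mul' (eLpNorm_condExp_le_eLpNorm f hp) le_rfl
  have hcondExp : eLpNorm (E.indicator (μ[Eᶜ.indicator f | m])) q μ ≤ δ :=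
    (eLpNorm_indicator_le _).trans <| (eLpNorm_condExp_le_eLpNorm _ hq).trans <|
      eLpNorm_indicator_le_eLpNorm_mul_rpow_measure p t q hE.compl hf.aestronglyMeasurable
  have hsmul : eLpNorm (μ⟦Eᶜ | m⟧ • E.indicator v) q μ ≤ δ :=
    (eLpNorm_smul_le_mul_eLpNorm hvm hqm).trans <|
      (mul_le_mul' (eLpNorm_condExp_indicator_one_le_rpow_measure ht)
        (eLpNorm_indicator_condExp_restrict_le hE f hp)).trans_eq (mul_comm _ _)
  calc eLpNorm (μ[f | m] - E.indicator v) q μ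
      = eLpNorm (Eᶜ.indicator (μ[f | m]) + E.indicator (μ[Eᶜ.indicator f | m])
          - μ⟦Eᶜ | m⟧ • E.indicator v) q μ :=
        eLpNorm_congr_ae (condExp_sub_indicator_condExp_restrict_ae_eq hm hE (hf.integrable hp))
    _ ≤ eLpNorm (Eᶜ.indicator (μ[f | m])) q μ + eLpNorm (E.indicator (μ[Eᶜ.indicator f | m])) q μ
          + eLpNorm (μ⟦Eᶜ | m⟧ • E.indicator v) q μ := by
        refine (eLpNorm_sub_le ((hfm.indicator hE.compl).add hfEm) (hqm.smul hvm) hq).trans ?_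
        gcongr
        exact eLpNorm_add_le (hfm.indicator hE.compl) hfEm hq
    _ ≤ δ + δ + δ := by gcongr
    _ = 3 * δ := by ring

theorem condExp_comap_congr_ae {f : Ω → F} (hf : Integrable f μ) {B B' : Ω → 𝓑}
    (hB : Measurable B) (hB' : Measurable B') (hBB' : B =ᵐ[μ] B') :
    μ[f | m𝓑.comap B] =ᵐ[μ] μ[f | m𝓑.comap B'] := by
  refine ae_eq_condExp_of_forall_setIntegral_eq hB'.comap_le hf
    (fun s _ _ => integrable_condExp.integrableOn) ?_ ?_
  · rintro _ ⟨t, ht, rfl⟩ -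
    have hpre : B' ⁻¹' t =ᵐ[μ] B ⁻¹' t := hBB'.symm.preimage t
    rw [setIntegral_congr_set hpre, setIntegral_congr_set hpre,
      setIntegral_condExp hB.comap_le hf ⟨t, ht, rfl⟩]
  · obtain ⟨g, hg, hgB⟩ := (stronglyMeasurable_condExp (μ := μ) (f := f)
      (m := m𝓑.comap B)).exists_eq_measurable_comp
    exact ⟨g ∘ B', hg.comp_measurable (comap_measurable B'), hgB ▸ hBB'.fun_comp g⟩

theorem indicator_condExp_comap_restrict_ae_eq (hE : MeasurableSet E) {f f' : Ω → F}
    (hf : IntegrableOn f E μ) {B B' : Ω → 𝓑} (hB : Measurable B) (hB' : Measurable B')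
    (hff' : Set.EqOn f f' E) (hBB' : Set.EqOn B B' E) :
    E.indicator ((μ.restrict E)[f | m𝓑.comap B]) =ᵐ[μ]
      E.indicator ((μ.restrict E)[f' | m𝓑.comap B']) :=
  (ae_eq_restrict_iff_indicator_ae_eq hE).1 <|
    (condExp_comap_congr_ae hf hB hB' (ae_restrict_of_forall_mem hE hBB')).trans <|
      condExp_congr_ae (ae_restrict_of_forall_mem hE hff')

theorem eLpNorm_condExp_comap_sub_condExp_comap_le (p t : ℝ≥0∞) {q : ℝ≥0∞}
    [ENNReal.HolderTriple p t q] (hq : 1 ≤ q) (hE : MeasurableSet E) {f f' : Ω → F}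
    (hf : MemLp f p μ) (hf' : MemLp f' p μ) {B B' : Ω → 𝓑} (hB : Measurable B)
    (hB' : Measurable B') (hff' : Set.EqOn f f' E) (hBB' : Set.EqOn B B' E) :
    eLpNorm (μ[f | m𝓑.comap B] - μ[f' | m𝓑.comap B']) q μ
      ≤ 3 * ((eLpNorm f p μ + eLpNorm f' p μ) * μ Eᶜ ^ (1 / t.toReal)) := by
  set u := μ[f | m𝓑.comap B]
  set u' := μ[f' | m𝓑.comap B']
  set v := E.indicator ((μ.restrict E)[f | m𝓑.comap B])
  set v' := E.indicator ((μ.restrict E)[f' | m𝓑.comap B'])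
  have hp : 1 ≤ p := hq.trans (ENNReal.HolderTriple.le p t q)
  have hvv' : v =ᵐ[μ] v' := indicator_condExp_comap_restrict_ae_eq hE
    (hf.integrable hp).integrableOn hB hB' hff' hBB'
  have hvm : AEStronglyMeasurable v μ :=
    (stronglyMeasurable_condExp.mono hB.comap_le).aestronglyMeasurable.indicator hE
  have hum : AEStronglyMeasurable u μ := integrable_condExp.aestronglyMeasurable
  have hum' : AEStronglyMeasurable u' μ := integrable_condExp.aestronglyMeasurable
  have huu' : u - u' =ᵐ[μ] (u - v) - (u' - v') := by
    filter_upwards [hvv'] with ω hω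
    simp only [Pi.sub_apply, hω, sub_sub_sub_cancel_right]
  calc eLpNorm (u - u') q μ = eLpNorm ((u - v) - (u' - v')) q μ := eLpNorm_congr_ae huu'
    _ ≤ eLpNorm (u - v) q μ + eLpNorm (u' - v') q μ :=
        eLpNorm_sub_le (hum.sub hvm) (hum'.sub (hvm.congr hvv')) hq
    _ ≤ 3 * (eLpNorm f p μ * μ Eᶜ ^ (1 / t.toReal))
          + 3 * (eLpNorm f' p μ * μ Eᶜ ^ (1 / t.toReal)) :=
        add_le_add
          (eLpNorm_condExp_sub_indicator_condExp_restrict_le p t hq hB.comap_le hE hf)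
          (eLpNorm_condExp_sub_indicator_condExp_restrict_le p t hq hB'.comap_le hE hf')
    _ = 3 * ((eLpNorm f p μ + eLpNorm f' p μ) * μ Eᶜ ^ (1 / t.toReal)) := by ring

end RestrictedConditioning

section PolynomialBounds

open scoped ENNReal

theorem exists_holderTriple_of_lt {p q : ℝ≥0∞} (hqp : q < p) :
    ∃ t : ℝ≥0∞, t ≠ ∞ ∧ ENNReal.HolderTriple p t q := by
  have hinv : p⁻¹ < q⁻¹ := ENNReal.inv_lt_inv.2 hqp
  exact ⟨(q⁻¹ - p⁻¹)⁻¹, ENNReal.inv_ne_top.2 (tsub_pos_of_lt hinv).ne',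
    ⟨by rw [inv_inv, add_tsub_cancel_of_le hinv.le]⟩⟩

theorem ofReal_mul_rpow_mul_ofReal_mul_rpow_rpow_le {a b x r₀ r s t : ℝ} (ha : 0 ≤ a) (hb : 0 ≤ b)
    (hx : 1 ≤ x) (ht : 0 < t) (hs : t * (r + r₀) ≤ s) :
    ENNReal.ofReal (a * x ^ r₀) * ENNReal.ofReal (b * x ^ (-s)) ^ (1 / t)
      ≤ ENNReal.ofReal (a * b ^ (1 / t) * x ^ (-r)) := by
  have hx0 : 0 < x := zero_lt_one.trans_le hx
  have hexp : r₀ + -s * (1 / t) ≤ -r := by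
    have hdiv : r + r₀ ≤ s / t := (le_div_iff₀' ht).2 hs
    rw [neg_mul, mul_one_div]
    linarith
  rw [ENNReal.ofReal_rpow_of_nonneg (by positivity) (by positivity),
    ← ENNReal.ofReal_mul (by positivity)]
  refine ENNReal.ofReal_le_ofReal ?_
  calc a * x ^ r₀ * (b * x ^ (-s)) ^ (1 / t)
      = a * b ^ (1 / t) * x ^ (r₀ + -s * (1 / t)) := by
        rw [Real.mul_rpow hb (by positivity), ← Real.rpow_mul hx0.le, Real.rpow_add hx0]
        ring
    _ ≤ a * b ^ (1 / t) * x ^ (-r) := by gcongr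

theorem stmt0_general {p q : ℝ≥0∞} (hq : 1 ≤ q) (hqp : q < p) {a : ℝ} (ha : 0 ≤ a) {κ : ℝ → ℝ}
    (hκ : ∀ s : ℝ, 1 < s → 0 ≤ κ s) (r₀ r : ℝ) :
    ∃ c : ℝ, 0 ≤ c ∧
      ∀ {Ω 𝓑 F : Type*} [MeasurableSpace Ω] [m𝓑 : MeasurableSpace 𝓑]
        [NormedAddCommGroup F] [NormedSpace ℝ F] [CompleteSpace F]
        (μ : Measure Ω) [IsFiniteMeasure μ] {A A' : Ω → F} {B B' : Ω → 𝓑} {E : Set Ω} {x : ℝ},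
        AEStronglyMeasurable A μ → AEStronglyMeasurable A' μ → Measurable B → Measurable B' →
        MeasurableSet E → Set.EqOn A A' E → Set.EqOn B B' E → 1 ≤ x →
        (∀ s : ℝ, 1 < s → μ Eᶜ ≤ ENNReal.ofReal (κ s * x ^ (-s))) →
        eLpNorm A p μ + eLpNorm A' p μ ≤ ENNReal.ofReal (a * x ^ r₀) →
        eLpNorm (μ[A | m𝓑.comap B] - μ[A' | m𝓑.comap B']) q μ
          ≤ ENNReal.ofReal (c * x ^ (-r)) := by
  obtain ⟨t, ht_top, hpt⟩ := exists_holderTriple_of_lt hqp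
  have ht : 1 ≤ t := hq.trans (ENNReal.HolderTriple.le t p q)
  have ht_pos : 0 < t.toReal := ENNReal.toReal_pos (zero_lt_one.trans_le ht).ne' ht_top
  set s : ℝ := max 2 (t.toReal * (r + r₀))
  have hs : 1 < s := one_lt_two.trans_le (le_max_left _ _)
  have hκs := hκ s hs
  refine ⟨3 * (a * κ s ^ (1 / t.toReal)), by positivity, ?_⟩
  intro Ω 𝓑 F _ m𝓑 _ _ _ μ _ A A' B B' E x hA hA' hB hB' hE hAA' hBB' hx hμE hnorm
  obtain ⟨hA_top, hA'_top⟩ := ENNReal.add_lt_top.1 (hnorm.trans_lt ENNReal.ofReal_lt_top)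
  calc eLpNorm (μ[A | m𝓑.comap B] - μ[A' | m𝓑.comap B']) q μ
      ≤ 3 * ((eLpNorm A p μ + eLpNorm A' p μ) * μ Eᶜ ^ (1 / t.toReal)) :=
        eLpNorm_condExp_comap_sub_condExp_comap_le p t hq hE ⟨hA, hA_top⟩ ⟨hA', hA'_top⟩ hB hB'
          hAA' hBB'
    _ ≤ 3 * (ENNReal.ofReal (a * x ^ r₀)
          * ENNReal.ofReal (κ s * x ^ (-s)) ^ (1 / t.toReal)) := by
        gcongr
        exact hμE s hs
    _ ≤ 3 * ENNReal.ofReal (a * κ s ^ (1 / t.toReal) * x ^ (-r)) := by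
        gcongr
        exact ofReal_mul_rpow_mul_ofReal_mul_rpow_rpow_le ha hκs hx ht_pos (le_max_right _ _)
    _ = ENNReal.ofReal (3 * (a * κ s ^ (1 / t.toReal)) * x ^ (-r)) := by
        rw [mul_assoc 3, ENNReal.ofReal_mul zero_le_three, ENNReal.ofReal_ofNat]

end PolynomialBounds

theorem stmt0
    (p r₀ cp : ℝ) (hp : 1 < p) (hr₀ : 0 ≤ r₀) (hcp : 0 ≤ cp)
    (κ : ℝ → ℝ) (hκ : ∀ r : ℝ, 1 < r → 0 ≤ κ r)
    (p' : ℝ) (hp' : 1 ≤ p') (hp'p : p' < p) (r : ℝ) (hr : 1 < r) :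
    ∃ c : ℝ, 0 ≤ c ∧
      ∀ {Ω : Type*} [MeasurableSpace Ω] (μ : Measure Ω) [IsProbabilityMeasure μ]
        (A A' B B' : ℕ → Ω → ℝ) (E : ℕ → Set Ω),
        (∀ n : ℕ, 1 ≤ n → Measurable (A n)) →
        (∀ n : ℕ, 1 ≤ n → Measurable (A' n)) →
        (∀ n : ℕ, 1 ≤ n → Measurable (B n)) →
        (∀ n : ℕ, 1 ≤ n → Measurable (B' n)) →
        (∀ n : ℕ, 1 ≤ n → MeasurableSet (E n)) →
        (∀ n : ℕ, 1 ≤ n → ∀ ω ∈ E n, (A n ω, B n ω) = (A' n ω, B' n ω)) →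
        (∀ s : ℝ, 1 < s → ∀ n : ℕ, 1 ≤ n →
          μ (E n)ᶜ ≤ ENNReal.ofReal (κ s * (n : ℝ) ^ (-s))) →
        (∀ n : ℕ, 1 ≤ n →
          eLpNorm (A n) (ENNReal.ofReal p) μ + eLpNorm (A' n) (ENNReal.ofReal p) μ
            ≤ ENNReal.ofReal (cp * (n : ℝ) ^ r₀)) →
        ∀ n : ℕ, 1 ≤ n →
          eLpNorm
              (μ[A n | MeasurableSpace.comap (B n) Real.measurableSpace]
                - μ[A' n | MeasurableSpace.comap (B' n) Real.measurableSpace])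
              (ENNReal.ofReal p') μ
            ≤ ENNReal.ofReal (c * (n : ℝ) ^ (-r)) := by
  obtain ⟨c, hc, h⟩ := stmt0_general (ENNReal.one_le_ofReal.2 hp')
    ((ENNReal.ofReal_lt_ofReal_iff (zero_lt_one.trans hp)).2 hp'p) hcp hκ r₀ r
  exact ⟨c, hc, fun μ _ A A' B B' E hA hA' hB hB' hE heq hμE hnorm n hn =>
    h μ (hA n hn).aestronglyMeasurable (hA' n hn).aestronglyMeasurable (hB n hn) (hB' n hn)
      (hE n hn) (fun ω hω => congrArg Prod.fst (heq n hn ω hω))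
      (fun ω hω => congrArg Prod.snd (heq n hn ω hω)) (Nat.one_le_cast.2 hn)
      (fun s hs => hμE s hs n hn) (hnorm n hn)⟩
end

section
/- Let n ≥ 1. Let π, π̃ be probability densities on ℝ, and let p, q : ℝ × ℝ → [0, ∞) be measurable with ∫_ℝ p(x, y) dy = 1 and ∫_ℝ q(x, y) dy = 1 for every x ∈ ℝ. Define probability densities on ℝ^{n+1} by f(x_0, …, x_n) = π(x_0) ∏_{i=0}^{n−1} p(x_i, x_{i+1}) and g(x_0, …, x_n) = π̃(x_0) ∏_{i=0}^{n−1} q(x_i, x_{i+1}). For x ∈ ℝ, set H²_x(p, q) = ∫_ℝ (√(p(x,y)) − √(q(x,y)))² dy, and let μ_i (resp. ν_i) be the density of the i-th marginal of f (resp. of g). Then ∫_{ℝ^{n+1}} (√f − √g)² ≤ ∫_ℝ (√π − √π̃)² + (1/2) Σ_{i=0}^{n−1} [ ∫_ℝ H²_x(p, q) μ_i(x) dx + ∫_ℝ H²_x(p, q) ν_i(x) dx ]. -/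
open MeasureTheory

noncomputable section

/-- `f` is a probability density with respect to `volume`
(the last condition forces integrability, since a non-integrable `f` has integral `0`). -/
structure IsProbDensity {α : Type*} [MeasureSpace α] (f : α → ℝ) : Prop where
  measurable : Measurable f
  nonneg : ∀ x, 0 ≤ f x
  integral_eq_one : ∫ x, f x = 1

/-- `f` is a (measurable, nonnegative, real-valued) density of the measure `m` on `ℝ` with
respect to Lebesgue measure. -/
structure IsDensityOf (m : Measure ℝ) (f : ℝ → ℝ) : Prop where
  measurable : Measurable f
  nonneg : ∀ x, 0 ≤ f x
  eq_withDensity : m = volume.withDensity (fun x => ENNReal.ofReal (f x))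

/-- The squared Hellinger distance `∫ (√f - √g)²` with respect to `volume`. -/
def hellingerSq {α : Type*} [MeasureSpace α] (f g : α → ℝ) : ℝ :=
  ∫ x, (√(f x) - √(g x)) ^ 2

/-- The conditional squared Hellinger distance `H²_x(p, q)` given the starting point `x`. -/
def condHellingerSq (p q : ℝ → ℝ → ℝ) (x : ℝ) : ℝ :=
  hellingerSq (p x) (q x)

/-- The joint density `π(x₀) ∏_{i<n} p(x_i, x_{i+1})` of the first `n + 1` states of the
homogeneous Markov chain with initial density `π` and transition density `p`. -/
def chainDensity (π : ℝ → ℝ) (p : ℝ → ℝ → ℝ) (n : ℕ) (x : Fin (n + 1) → ℝ) : ℝ :=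
  π (x 0) * ∏ i : Fin n, p (x i.castSucc) (x i.succ)

/-- The `i`-th marginal law of the measure on `ℝ^{n+1}` with density `f`. -/
def marginalLaw {n : ℕ} (f : (Fin (n + 1) → ℝ) → ℝ) (i : Fin (n + 1)) : Measure ℝ :=
  (volume.withDensity (fun x => ENNReal.ofReal (f x))).map (fun x => x i)

end

/-!
The argument is an exact chain rule. If `f`, `g` are densities of the past and `p`, `q` are
transition densities, then integrating
`(√(a u) - √(b v))² = √a √b (√u - √v)² + (a - √a √b) u + (b - √a √b) v`
over the new state, with `a = f x`, `b = g x`, `u = p x y`, `v = q x y`, gives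
`H²(f ⊗ p, g ⊗ q) = H²(f, g) + ∫ √(f x) √(g x) H²(p x, q x) dx`.
The weight `√f √g` is at most `(f + g) / 2`, and the marginal laws of a chain do not change when
it is prolonged, so the bound follows by induction on the length of the chain.
-/

section Law

variable {α β : Type*} [MeasureSpace α] [MeasureSpace β]

/-- The measure with density `f` with respect to `volume`; negative values of `f` count as `0`. -/
noncomputable abbrev lawOf (f : α → ℝ) : Measure α :=
  volume.withDensity fun x => ENNReal.ofReal (f x)

lemma integral_lawOf {f : α → ℝ} (hf : Measurable f) (hf0 : ∀ x, 0 ≤ f x) (h : α → ℝ) :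
    ∫ x, h x ∂lawOf f = ∫ x, h x * f x := by
  rw [integral_withDensity_eq_integral_toReal_smul hf.ennreal_ofReal
    (.of_forall fun _ => ENNReal.ofReal_lt_top)]
  simp only [ENNReal.toReal_ofReal (hf0 _), smul_eq_mul, mul_comm]

lemma map_lawOf_comp {φ : α → β} (hφ : MeasurePreserving φ) {f : β → ℝ} (hf : Measurable f) :
    (lawOf (f ∘ φ)).map φ = lawOf f := by
  ext s hs
  rw [Measure.map_apply hφ.measurable hs, withDensity_apply _ (hφ.measurable hs),
    withDensity_apply _ hs]
  exact hφ.setLIntegral_comp_preimage hs hf.ennreal_ofReal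

lemma IsProbDensity.integrable {f : α → ℝ} (hf : IsProbDensity f) : Integrable f :=
  integrable_of_integral_eq_one hf.integral_eq_one

lemma isProbDensity_iff_isProbabilityMeasure_lawOf {f : α → ℝ} (hf : Measurable f)
    (hf0 : ∀ x, 0 ≤ f x) : IsProbDensity f ↔ IsProbabilityMeasure (lawOf f) := by
  have h : ∫ x, f x = (∫⁻ x, ENNReal.ofReal (f x)).toReal :=
    integral_eq_lintegral_of_nonneg_ae (.of_forall hf0) hf.aestronglyMeasurable
  rw [isProbabilityMeasure_iff, withDensity_apply _ .univ, setLIntegral_univ,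
    ← ENNReal.toReal_eq_one_iff, ← h]
  exact ⟨fun hf => hf.integral_eq_one, fun h1 => ⟨hf, hf0, h1⟩⟩

lemma IsProbDensity.isProbabilityMeasure_lawOf {f : α → ℝ} (hf : IsProbDensity f) :
    IsProbabilityMeasure (lawOf f) :=
  (isProbDensity_iff_isProbabilityMeasure_lawOf hf.measurable hf.nonneg).1 hf

lemma IsProbDensity.lintegral_eq_one {f : α → ℝ} (hf : IsProbDensity f) :
    ∫⁻ x, ENNReal.ofReal (f x) = 1 := by
  rw [← ofReal_integral_eq_lintegral_ofReal hf.integrable (.of_forall hf.nonneg),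
    hf.integral_eq_one, ENNReal.ofReal_one]

lemma isProbDensity_comp_iff (e : α ≃ᵐ β) (he : MeasurePreserving e) {f : β → ℝ} :
    IsProbDensity (f ∘ e) ↔ IsProbDensity f := by
  have hint : ∫ x, (f ∘ e) x = ∫ y, f y := he.integral_comp e.measurableEmbedding f
  constructor <;> intro h
  · exact ⟨e.measurable_comp_iff.1 h.measurable, e.surjective.forall.2 h.nonneg,
      hint ▸ h.integral_eq_one⟩
  · exact ⟨h.measurable.comp e.measurable, fun x => h.nonneg (e x), hint ▸ h.integral_eq_one⟩

end Law

section Hellinger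

lemma sq_sqrt_sub_sqrt_le_add {a b : ℝ} (ha : 0 ≤ a) (hb : 0 ≤ b) : (√a - √b) ^ 2 ≤ a + b := by
  have hab : 0 ≤ √a * √b := by positivity
  linarith [sub_sq (√a) (√b), Real.sq_sqrt ha, Real.sq_sqrt hb]

lemma sqrt_mul_sqrt_le_half_add {a b : ℝ} (ha : 0 ≤ a) (hb : 0 ≤ b) :
    √a * √b ≤ 1 / 2 * (a + b) := by
  linarith [two_mul_le_add_sq (√a) (√b), Real.sq_sqrt ha, Real.sq_sqrt hb]

lemma sq_sqrt_mul_sub_sqrt_mul {a b u v : ℝ} (ha : 0 ≤ a) (hb : 0 ≤ b) (hu : 0 ≤ u)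
    (hv : 0 ≤ v) :
    (√(a * u) - √(b * v)) ^ 2 =
      √a * √b * (√u - √v) ^ 2 + (a - √a * √b) * u + (b - √a * √b) * v := by
  rw [Real.sqrt_mul ha, Real.sqrt_mul hb]
  linear_combination √u ^ 2 * Real.sq_sqrt ha + √v ^ 2 * Real.sq_sqrt hb +
    (a - √a * √b) * Real.sq_sqrt hu + (b - √a * √b) * Real.sq_sqrt hv

section Integrable

variable {α : Type*} [MeasurableSpace α] {μ : Measure α} {f g : α → ℝ}

lemma memLp_two_sqrt (hf : Integrable f μ) : MemLp (fun x => √(f x)) 2 μ := by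
  rw [memLp_two_iff_integrable_sq (Real.continuous_sqrt.comp_aestronglyMeasurable hf.1)]
  simpa only [Real.sq_sqrt'] using hf.pos_part

lemma integrable_sq_sqrt_sub_sqrt (hf : Integrable f μ) (hg : Integrable g μ) :
    Integrable (fun x => (√(f x) - √(g x)) ^ 2) μ :=
  ((memLp_two_sqrt hf).sub (memLp_two_sqrt hg)).integrable_sq

lemma integrable_sqrt_mul_sqrt (hf : Integrable f μ) (hg : Integrable g μ) :
    Integrable (fun x => √(f x) * √(g x)) μ :=
  (memLp_two_sqrt hf).integrable_mul (memLp_two_sqrt hg)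

end Integrable

variable {α β : Type*} [MeasureSpace α] [MeasureSpace β] {f g : α → ℝ}

lemma hellingerSq_nonneg (f g : α → ℝ) : 0 ≤ hellingerSq f g :=
  integral_nonneg fun _ => sq_nonneg _

lemma hellingerSq_le_two (hf : IsProbDensity f) (hg : IsProbDensity g) :
    hellingerSq f g ≤ 2 :=
  calc
    hellingerSq f g ≤ ∫ x, (f x + g x) :=
      integral_mono (integrable_sq_sqrt_sub_sqrt hf.integrable hg.integrable)
        (hf.integrable.add hg.integrable)
        fun x => sq_sqrt_sub_sqrt_le_add (hf.nonneg x) (hg.nonneg x)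
    _ = 2 := by
      rw [integral_add hf.integrable hg.integrable, hf.integral_eq_one, hg.integral_eq_one,
        one_add_one_eq_two]

lemma hellingerSq_comp {φ : α → β} (hφ : MeasurePreserving φ) (hφ' : MeasurableEmbedding φ)
    (f g : β → ℝ) : hellingerSq (f ∘ φ) (g ∘ φ) = hellingerSq f g :=
  hφ.integral_comp hφ' fun y => (√(f y) - √(g y)) ^ 2

lemma hellingerSq_const_mul (hf : IsProbDensity f) (hg : IsProbDensity g) {a b : ℝ}
    (ha : 0 ≤ a) (hb : 0 ≤ b) :
    hellingerSq (fun x => a * f x) (fun x => b * g x) =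
      (√a - √b) ^ 2 + √a * √b * hellingerSq f g := by
  have hD := (integrable_sq_sqrt_sub_sqrt hf.integrable hg.integrable).const_mul (√a * √b)
  have hF := hf.integrable.const_mul (a - √a * √b)
  have hG := hg.integrable.const_mul (b - √a * √b)
  simp only [hellingerSq, sq_sqrt_mul_sub_sqrt_mul ha hb (hf.nonneg _) (hg.nonneg _)]
  rw [integral_add (hD.fun_add hF) hG, integral_add hD hF, integral_const_mul,
    integral_const_mul, integral_const_mul, hf.integral_eq_one, hg.integral_eq_one]
  linear_combination -Real.sq_sqrt ha - Real.sq_sqrt hb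

end Hellinger

section Transition

variable {α β γ : Type*}

/-- `p` is a transition density from `α` to `β`: the density, with respect to `volume` on `β`, of
a Markov kernel. -/
structure IsTransitionDensity [MeasurableSpace α] [MeasureSpace β] (p : α → β → ℝ) : Prop where
  measurable : Measurable (Function.uncurry p)
  isProbDensity : ∀ x, IsProbDensity (p x)

/-- The joint density of `(X, Y)` when `X` has density `f` and, given `X = x`, `Y` has density
`p x`. -/
def jointDensity (f : α → ℝ) (p : α → β → ℝ) (z : α × β) : ℝ :=
  f z.1 * p z.1 z.2

lemma IsTransitionDensity.comp [MeasurableSpace α] [MeasureSpace β] [MeasurableSpace γ]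
    {p : α → β → ℝ} (hp : IsTransitionDensity p) {φ : γ → α} (hφ : Measurable φ) :
    IsTransitionDensity fun x => p (φ x) :=
  ⟨hp.measurable.comp (hφ.prodMap measurable_id), fun x => hp.isProbDensity (φ x)⟩

lemma measurable_jointDensity [MeasurableSpace α] [MeasurableSpace β] {f : α → ℝ}
    {p : α → β → ℝ} (hf : Measurable f) (hp : Measurable (Function.uncurry p)) :
    Measurable (jointDensity f p) :=
  (hf.comp measurable_fst).mul hp

lemma measurable_hellingerSq [MeasurableSpace α] [MeasureSpace β]
    [SFinite (volume : Measure β)] {p q : α → β → ℝ} (hp : Measurable (Function.uncurry p))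
    (hq : Measurable (Function.uncurry q)) : Measurable fun x => hellingerSq (p x) (q x) :=
  ((hp.sqrt.sub hq.sqrt).pow_const 2).stronglyMeasurable.integral_prod_right.measurable

variable [MeasureSpace α] [MeasureSpace β] [SFinite (volume : Measure β)]
  {f g : α → ℝ} {p q : α → β → ℝ}

lemma integrable_hellingerSq_mul (hp : IsTransitionDensity p) (hq : IsTransitionDensity q)
    (hf : Integrable f) : Integrable fun x => hellingerSq (p x) (q x) * f x := by
  refine hf.bdd_mul (c := 2)
    (measurable_hellingerSq hp.measurable hq.measurable).aestronglyMeasurable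
    (.of_forall fun x => ?_)
  rw [Real.norm_of_nonneg (hellingerSq_nonneg _ _)]
  exact hellingerSq_le_two (hp.isProbDensity x) (hq.isProbDensity x)

variable [SFinite (volume : Measure α)]

lemma map_fst_lawOf_jointDensity (hf : Measurable f) (hp : IsTransitionDensity p) :
    (lawOf (jointDensity f p)).map Prod.fst = lawOf f := by
  have hm := measurable_jointDensity hf hp.measurable
  have hinner : ∀ x, ∫⁻ y, ENNReal.ofReal (f x * p x y) = ENNReal.ofReal (f x) := fun x => by
    simp only [ENNReal.ofReal_mul' ((hp.isProbDensity x).nonneg _)]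
    rw [lintegral_const_mul _ (hp.isProbDensity x).measurable.ennreal_ofReal,
      (hp.isProbDensity x).lintegral_eq_one, mul_one]
  ext s hs
  rw [Measure.map_apply measurable_fst hs, withDensity_apply _ (measurable_fst hs),
    withDensity_apply _ hs, ← Set.prod_univ, Measure.volume_eq_prod,
    setLIntegral_prod _ hm.ennreal_ofReal.aemeasurable]
  simp only [setLIntegral_univ, jointDensity, hinner]

lemma isProbDensity_jointDensity (hf : IsProbDensity f) (hp : IsTransitionDensity p) :
    IsProbDensity (jointDensity f p) := by
  have hm := measurable_jointDensity hf.measurable hp.measurable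
  have h0 : ∀ z, 0 ≤ jointDensity f p z := fun z =>
    mul_nonneg (hf.nonneg z.1) ((hp.isProbDensity z.1).nonneg z.2)
  rw [isProbDensity_iff_isProbabilityMeasure_lawOf hm h0,
    ← Measure.isProbabilityMeasure_map_iff measurable_fst.aemeasurable,
    map_fst_lawOf_jointDensity hf.measurable hp]
  exact hf.isProbabilityMeasure_lawOf

lemma hellingerSq_jointDensity (hf : IsProbDensity f) (hg : IsProbDensity g)
    (hp : IsTransitionDensity p) (hq : IsTransitionDensity q) :
    hellingerSq (jointDensity f p) (jointDensity g q) =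
      hellingerSq f g + ∫ x, hellingerSq (p x) (q x) * (√(f x) * √(g x)) := by
  have hjoint := integrable_sq_sqrt_sub_sqrt (isProbDensity_jointDensity hf hp).integrable
    (isProbDensity_jointDensity hg hq).integrable
  rw [Measure.volume_eq_prod] at hjoint
  calc
    hellingerSq (jointDensity f p) (jointDensity g q)
      = ∫ x, hellingerSq (fun y => f x * p x y) fun y => g x * q x y :=
        integral_prod _ hjoint
    _ = ∫ x, ((√(f x) - √(g x)) ^ 2 + hellingerSq (p x) (q x) * (√(f x) * √(g x))) :=
        integral_congr_ae (.of_forall fun x => by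
          simp only [hellingerSq_const_mul (hp.isProbDensity x) (hq.isProbDensity x)
            (hf.nonneg x) (hg.nonneg x), mul_comm])
    _ = hellingerSq f g + ∫ x, hellingerSq (p x) (q x) * (√(f x) * √(g x)) :=
        integral_add (integrable_sq_sqrt_sub_sqrt hf.integrable hg.integrable)
          (integrable_hellingerSq_mul hp hq (integrable_sqrt_mul_sqrt hf.integrable hg.integrable))

lemma hellingerSq_jointDensity_le (hf : IsProbDensity f) (hg : IsProbDensity g)
    (hp : IsTransitionDensity p) (hq : IsTransitionDensity q) :
    hellingerSq (jointDensity f p) (jointDensity g q) ≤ hellingerSq f g + 1 / 2 *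
      ((∫ x, hellingerSq (p x) (q x) * f x) + ∫ x, hellingerSq (p x) (q x) * g x) := by
  have hHf := integrable_hellingerSq_mul hp hq hf.integrable
  have hHg := integrable_hellingerSq_mul hp hq hg.integrable
  rw [hellingerSq_jointDensity hf hg hp hq, ← integral_add hHf hHg, ← integral_const_mul]
  refine add_le_add le_rfl (integral_mono (integrable_hellingerSq_mul hp hq
    (integrable_sqrt_mul_sqrt hf.integrable hg.integrable)) ((hHf.add hHg).const_mul _)
    fun x => ?_)
  calc
    hellingerSq (p x) (q x) * (√(f x) * √(g x))
      ≤ hellingerSq (p x) (q x) * (1 / 2 * (f x + g x)) :=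
        mul_le_mul_of_nonneg_left (sqrt_mul_sqrt_le_half_add (hf.nonneg x) (hg.nonneg x))
          (hellingerSq_nonneg _ _)
    _ = 1 / 2 * (hellingerSq (p x) (q x) * f x + hellingerSq (p x) (q x) * g x) := by ring

end Transition

section Snoc

/-- Appending a last coordinate, as a measurable equivalence. -/
def snocMeasurableEquiv (n : ℕ) (α : Type*) [MeasurableSpace α] :
    (Fin n → α) × α ≃ᵐ (Fin (n + 1) → α) :=
  MeasurableEquiv.prodComm.trans (MeasurableEquiv.piFinSuccAbove (fun _ => α) (Fin.last n)).symm

lemma snocMeasurableEquiv_apply {n : ℕ} {α : Type*} [MeasurableSpace α] (z : (Fin n → α) × α) :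
    snocMeasurableEquiv n α z = Fin.snoc (α := fun _ => α) z.1 z.2 := by
  simp [snocMeasurableEquiv, MeasurableEquiv.prodComm, MeasurableEquiv.piFinSuccAbove,
    Fin.insertNthEquiv, Fin.insertNth_last']

lemma measurePreserving_snocMeasurableEquiv (n : ℕ) (α : Type*) [MeasureSpace α]
    [SigmaFinite (volume : Measure α)] : MeasurePreserving (snocMeasurableEquiv n α) :=
  (volume_preserving_piFinSuccAbove (fun _ : Fin (n + 1) => α) (Fin.last n)).symm.comp
    Measure.measurePreserving_swap

end Snoc

section Marginal

lemma IsDensityOf.eq_lawOf {m : Measure ℝ} {μ : ℝ → ℝ} (hμ : IsDensityOf m μ) : m = lawOf μ :=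
  hμ.eq_withDensity

lemma IsDensityOf.integral_eq {m : Measure ℝ} {μ : ℝ → ℝ} (hμ : IsDensityOf m μ) (h : ℝ → ℝ) :
    ∫ t, h t ∂m = ∫ t, h t * μ t := by
  rw [hμ.eq_lawOf]
  exact integral_lawOf hμ.measurable hμ.nonneg h

lemma IsDensityOf.isProbDensity {m : Measure ℝ} [hm : IsProbabilityMeasure m] {μ : ℝ → ℝ}
    (hμ : IsDensityOf m μ) : IsProbDensity μ :=
  (isProbDensity_iff_isProbabilityMeasure_lawOf hμ.measurable hμ.nonneg).2
    (hμ.eq_lawOf ▸ hm)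

lemma exists_isDensityOf {m : Measure ℝ} [SigmaFinite m] (hm : m ≪ volume) :
    ∃ μ : ℝ → ℝ, IsDensityOf m μ := by
  refine ⟨fun x => (m.rnDeriv volume x).toReal, (m.measurable_rnDeriv volume).ennreal_toReal,
    fun _ => ENNReal.toReal_nonneg, ?_⟩
  calc
    m = volume.withDensity (m.rnDeriv volume) := (Measure.withDensity_rnDeriv_eq m volume hm).symm
    _ = _ := withDensity_congr_ae <| (m.rnDeriv_lt_top volume).mono fun _ hx =>
      (ENNReal.ofReal_toReal hx.ne).symm

variable {n : ℕ} {f : (Fin (n + 1) → ℝ) → ℝ}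

lemma marginalLaw_eq_map_lawOf (f : (Fin (n + 1) → ℝ) → ℝ) (i : Fin (n + 1)) :
    marginalLaw f i = (lawOf f).map fun x => x i :=
  rfl

lemma marginalLaw_absolutelyContinuous (f : (Fin (n + 1) → ℝ) → ℝ) (i : Fin (n + 1)) :
    marginalLaw f i ≪ volume :=
  ((withDensity_absolutelyContinuous _ _).map (measurable_pi_apply i)).trans
    (Measure.quasiMeasurePreserving_eval (fun _ => volume) i).absolutelyContinuous

lemma isProbabilityMeasure_marginalLaw (hf : IsProbDensity f) (i : Fin (n + 1)) :
    IsProbabilityMeasure (marginalLaw f i) :=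
  have := hf.isProbabilityMeasure_lawOf
  Measure.isProbabilityMeasure_map (measurable_pi_apply i).aemeasurable

lemma exists_isDensityOf_marginalLaw (hf : IsProbDensity f) (i : Fin (n + 1)) :
    ∃ μ : ℝ → ℝ, IsDensityOf (marginalLaw f i) μ :=
  have := isProbabilityMeasure_marginalLaw hf i
  exists_isDensityOf (marginalLaw_absolutelyContinuous f i)

lemma integral_marginalLaw (hf : Measurable f) (hf0 : ∀ x, 0 ≤ f x) (i : Fin (n + 1))
    {h : ℝ → ℝ} (hh : Measurable h) : ∫ t, h t ∂marginalLaw f i = ∫ x, h (x i) * f x := by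
  rw [marginalLaw_eq_map_lawOf,
    integral_map (measurable_pi_apply i).aemeasurable hh.aestronglyMeasurable,
    integral_lawOf hf hf0]

end Marginal

section Chain

variable {π π' : ℝ → ℝ} {p q : ℝ → ℝ → ℝ}

lemma chainDensity_zero (π : ℝ → ℝ) (p : ℝ → ℝ → ℝ) :
    chainDensity π p 0 = π ∘ MeasurableEquiv.funUnique (Fin 1) ℝ := by
  ext x
  simp [chainDensity]

lemma chainDensity_succ_comp_snoc (π : ℝ → ℝ) (p : ℝ → ℝ → ℝ) (n : ℕ) :
    chainDensity π p (n + 1) ∘ snocMeasurableEquiv (n + 1) ℝ =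
      jointDensity (chainDensity π p n) fun x => p (x (Fin.last n)) := by
  ext ⟨x, y⟩
  have h0 : Fin.snoc (α := fun _ => ℝ) x y 0 = x 0 :=
    Fin.snoc_castSucc (α := fun _ => ℝ) (i := 0) ..
  simp only [Function.comp_apply, snocMeasurableEquiv_apply, chainDensity, jointDensity,
    Fin.prod_univ_castSucc, Fin.succ_castSucc, Fin.succ_last, Fin.snoc_castSucc, Fin.snoc_last,
    h0, mul_assoc]

lemma isProbDensity_chainDensity (hπ : IsProbDensity π) (hp : IsTransitionDensity p) (n : ℕ) :
    IsProbDensity (chainDensity π p n) := by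
  induction n with
  | zero =>
    rw [chainDensity_zero]
    exact (isProbDensity_comp_iff _ (volume_preserving_funUnique (Fin 1) ℝ)).2 hπ
  | succ n ih =>
    rw [← isProbDensity_comp_iff _ (measurePreserving_snocMeasurableEquiv (n + 1) ℝ),
      chainDensity_succ_comp_snoc]
    exact isProbDensity_jointDensity ih (hp.comp (measurable_pi_apply _))

lemma marginalLaw_chainDensity_succ (hπ : IsProbDensity π) (hp : IsTransitionDensity p) (n : ℕ)
    (i : Fin (n + 1)) :
    marginalLaw (chainDensity π p (n + 1)) i.castSucc = marginalLaw (chainDensity π p n) i := by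
  have he := measurePreserving_snocMeasurableEquiv (n + 1) ℝ
  have hf := isProbDensity_chainDensity hπ hp
  have hcoord : (fun x : Fin (n + 2) → ℝ => x i.castSucc) ∘ snocMeasurableEquiv (n + 1) ℝ =
      (fun x : Fin (n + 1) → ℝ => x i) ∘ Prod.fst := by
    ext z
    simp only [Function.comp_apply, snocMeasurableEquiv_apply, Fin.snoc_castSucc]
  rw [marginalLaw_eq_map_lawOf, ← map_lawOf_comp he (hf (n + 1)).measurable,
    chainDensity_succ_comp_snoc, Measure.map_map (measurable_pi_apply _) he.measurable, hcoord,
    ← Measure.map_map (measurable_pi_apply i) measurable_fst,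
    map_fst_lawOf_jointDensity (hf n).measurable (hp.comp (measurable_pi_apply _)),
    marginalLaw_eq_map_lawOf]

lemma hellingerSq_chainDensity_zero :
    hellingerSq (chainDensity π p 0) (chainDensity π' q 0) = hellingerSq π π' := by
  rw [chainDensity_zero, chainDensity_zero]
  exact hellingerSq_comp (volume_preserving_funUnique (Fin 1) ℝ)
    (MeasurableEquiv.measurableEmbedding _) π π'

lemma hellingerSq_chainDensity_succ_le (hπ : IsProbDensity π) (hπ' : IsProbDensity π')
    (hp : IsTransitionDensity p) (hq : IsTransitionDensity q) (n : ℕ) :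
    hellingerSq (chainDensity π p (n + 1)) (chainDensity π' q (n + 1)) ≤
      hellingerSq (chainDensity π p n) (chainDensity π' q n) + 1 / 2 *
        ((∫ t, condHellingerSq p q t ∂marginalLaw (chainDensity π p n) (Fin.last n)) +
          ∫ t, condHellingerSq p q t ∂marginalLaw (chainDensity π' q n) (Fin.last n)) := by
  have hf := isProbDensity_chainDensity hπ hp n
  have hg := isProbDensity_chainDensity hπ' hq n
  have hH : Measurable (condHellingerSq p q) := measurable_hellingerSq hp.measurable hq.measurable
  have hlast : Measurable fun x : Fin (n + 1) → ℝ => x (Fin.last n) := measurable_pi_apply _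
  rw [integral_marginalLaw hf.measurable hf.nonneg _ hH,
    integral_marginalLaw hg.measurable hg.nonneg _ hH,
    ← hellingerSq_comp (measurePreserving_snocMeasurableEquiv (n + 1) ℝ)
      (MeasurableEquiv.measurableEmbedding _),
    chainDensity_succ_comp_snoc, chainDensity_succ_comp_snoc]
  exact hellingerSq_jointDensity_le hf hg (hp.comp hlast) (hq.comp hlast)

lemma hellingerSq_chainDensity_le (hπ : IsProbDensity π) (hπ' : IsProbDensity π')
    (hp : IsTransitionDensity p) (hq : IsTransitionDensity q) (n : ℕ) :
    hellingerSq (chainDensity π p n) (chainDensity π' q n) ≤ hellingerSq π π' + 1 / 2 *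
      ∑ i : Fin n,
        ((∫ t, condHellingerSq p q t ∂marginalLaw (chainDensity π p n) i.castSucc) +
          ∫ t, condHellingerSq p q t ∂marginalLaw (chainDensity π' q n) i.castSucc) := by
  induction n with
  | zero => simp [hellingerSq_chainDensity_zero]
  | succ n ih =>
    have hstep := hellingerSq_chainDensity_succ_le hπ hπ' hp hq n
    simp only [marginalLaw_chainDensity_succ hπ hp, marginalLaw_chainDensity_succ hπ' hq]
    rw [Fin.sum_univ_castSucc]
    linarith

end Chain

/-- Tensorization of the squared Hellinger distance for the laws of two homogeneous Markov chains
on `ℝ` with transition densities `p`, `q` and initial densities `π`, `π'`. The conclusion also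
records that `f`, `g` are probability densities, that their marginals have densities, and that
all the integrands occurring in the inequality are integrable. -/
theorem stmt7
    (n : ℕ) (hn : 1 ≤ n)
    (π π' : ℝ → ℝ) (hπ : IsProbDensity π) (hπ' : IsProbDensity π')
    (p q : ℝ → ℝ → ℝ)
    (hpm : Measurable (Function.uncurry p)) (hqm : Measurable (Function.uncurry q))
    (hp0 : ∀ x y, 0 ≤ p x y) (hq0 : ∀ x y, 0 ≤ q x y)
    (hp1 : ∀ x, ∫ y : ℝ, p x y = 1) (hq1 : ∀ x, ∫ y : ℝ, q x y = 1)
    (f g : (Fin (n + 1) → ℝ) → ℝ)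
    (hf : f = chainDensity π p n) (hg : g = chainDensity π' q n) :
    IsProbDensity f ∧ IsProbDensity g ∧
    (∀ i : Fin (n + 1), ∃ μ : ℝ → ℝ, IsDensityOf (marginalLaw f i) μ) ∧
    (∀ i : Fin (n + 1), ∃ ν : ℝ → ℝ, IsDensityOf (marginalLaw g i) ν) ∧
    Integrable (fun x => (√(f x) - √(g x)) ^ 2) ∧
    Integrable (fun t => (√(π t) - √(π' t)) ^ 2) ∧
    (∀ x, Integrable (fun y => (√(p x y) - √(q x y)) ^ 2)) ∧
    ∀ μ ν : Fin n → ℝ → ℝ,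
      (∀ i, IsDensityOf (marginalLaw f i.castSucc) (μ i)) →
      (∀ i, IsDensityOf (marginalLaw g i.castSucc) (ν i)) →
      (∀ i, Integrable (fun x => condHellingerSq p q x * μ i x)) ∧
      (∀ i, Integrable (fun x => condHellingerSq p q x * ν i x)) ∧
      hellingerSq f g ≤ hellingerSq π π' +
        (1 / 2) * ∑ i : Fin n,
          ((∫ x, condHellingerSq p q x * μ i x) + ∫ x, condHellingerSq p q x * ν i x) := by
  subst hf hg
  have hp : IsTransitionDensity p := ⟨hpm, fun x => ⟨hpm.of_uncurry_left, hp0 x, hp1 x⟩⟩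
  have hq : IsTransitionDensity q := ⟨hqm, fun x => ⟨hqm.of_uncurry_left, hq0 x, hq1 x⟩⟩
  have hf := isProbDensity_chainDensity hπ hp n
  have hg := isProbDensity_chainDensity hπ' hq n
  refine ⟨hf, hg, exists_isDensityOf_marginalLaw hf, exists_isDensityOf_marginalLaw hg,
    integrable_sq_sqrt_sub_sqrt hf.integrable hg.integrable,
    integrable_sq_sqrt_sub_sqrt hπ.integrable hπ'.integrable,
    fun x => integrable_sq_sqrt_sub_sqrt (hp.isProbDensity x).integrable
      (hq.isProbDensity x).integrable, fun μ ν hμ hν => ⟨fun i => ?_, fun i => ?_, ?_⟩⟩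
  · have := isProbabilityMeasure_marginalLaw hf i.castSucc
    exact integrable_hellingerSq_mul hp hq (hμ i).isProbDensity.integrable
  · have := isProbabilityMeasure_marginalLaw hg i.castSucc
    exact integrable_hellingerSq_mul hp hq (hν i).isProbDensity.integrable
  · simpa only [(hμ _).integral_eq, (hν _).integral_eq] using
      hellingerSq_chainDensity_le hπ hπ' hp hq n
end
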